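/- For the Weyl operator W_f with symbol f ∈ 𝒟(ℚ_p^{2n}), one has W_f[ψ](ξ) = ∫ K(ξ,η) ψ(η) d^nη with kernel K(ξ,η) = ∫ f((η+ξ)/2, y) χ(∑_i (η_i - ξ_i) y_i) d^n y, and the operator norm bound ‖W_f[ψ]‖_{L²} ≤ ‖F[f]‖_{L¹} ‖ψ‖_{L²} holds for all ψ ∈ 𝒟(ℚ_p^n). -/

import Mathlib

open Classical MeasureTheory

/-- The p-adic fractional part of `x`. -/
noncomputable def padicFract (p : ℕ) [Fact p.Prime] (x : ℚ_[p]) : ℚ :=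
  if h : ∃ r : ℚ, 0 ≤ r ∧ r < 1 ∧ (∃ k : ℕ, ∃ m : ℤ, r * (p : ℚ) ^ k = (m : ℚ)) ∧
      ‖x - (r : ℚ_[p])‖ ≤ 1 then h.choose else 0

/-- The standard additive character `χ(x) = exp(2πi[x])` of `ℚ_p`. -/
noncomputable def stdChar (p : ℕ) [Fact p.Prime] (x : ℚ_[p]) : ℂ :=
  Complex.exp (2 * Real.pi * Complex.I * (padicFract p x : ℂ))

variable (p : ℕ) [Fact p.Prime] (n : ℕ) [MeasurableSpace ℚ_[p]] [BorelSpace ℚ_[p]]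
  (μ : Measure (Fin n → ℚ_[p]))

/-- The symplectic Fourier transform on `ℚ_p^{2n} = ℚ_p^n × ℚ_p^n`. -/
noncomputable def symplFourier
    (f : (Fin n → ℚ_[p]) × (Fin n → ℚ_[p]) → ℂ)
    (z : (Fin n → ℚ_[p]) × (Fin n → ℚ_[p])) : ℂ :=
  ∫ w, stdChar p ((∑ i, z.1 i * w.2 i) - ∑ i, z.2 i * w.1 i) * f w ∂(μ.prod μ)

/-- The ordinary Fourier transform `F[f](w) = ∫ f(x) χ(w·x) d^{2n}x` on `ℚ_p^{2n}`. -/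
noncomputable def fourier2n
    (f : (Fin n → ℚ_[p]) × (Fin n → ℚ_[p]) → ℂ)
    (w : (Fin n → ℚ_[p]) × (Fin n → ℚ_[p])) : ℂ :=
  ∫ x, f x * stdChar p ((∑ i, w.1 i * x.1 i) + ∑ i, w.2 i * x.2 i) ∂(μ.prod μ)

/-- The Weyl operator with symbol `f`. -/
noncomputable def weylOp
    (f : (Fin n → ℚ_[p]) × (Fin n → ℚ_[p]) → ℂ)
    (ψ : (Fin n → ℚ_[p]) → ℂ) (ξ : Fin n → ℚ_[p]) : ℂ :=
  ∫ z, symplFourier p n μ f z * ψ (ξ + z.1) *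
      stdChar p (∑ i, (z.2 i * ξ i + z.1 i * z.2 i / 2)) ∂(μ.prod μ)

/-- The kernel of the Weyl operator:
`K(ξ,η) = ∫ f((η+ξ)/2, y) χ(∑ᵢ (ηᵢ-ξᵢ)yᵢ) d^n y`. -/
noncomputable def weylKernel
    (f : (Fin n → ℚ_[p]) × (Fin n → ℚ_[p]) → ℂ)
    (ξ η : Fin n → ℚ_[p]) : ℂ :=
  ∫ y, f (fun i => (η i + ξ i) / 2, y) * stdChar p (∑ i, (η i - ξ i) * y i) ∂μ

/-!
The symplectic Fourier transform of a locally constant, compactly supported symbol is continuous and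
compactly supported, so Fubini applies to the integral defining the Weyl operator, and Fourier
inversion in the momentum variable evaluates the symbol at the midpoint of `ξ` and `η`: this is the
kernel. Inversion itself is Parseval's identity against the indicator of a dual ball, outside of
which the transform of a function constant on small balls vanishes.

The same integral exhibits the Weyl operator as a superposition of translations twisted by
unimodular phases, which are isometries of `L^r`, weighted by the symplectic Fourier transform.
Minkowski's inequality bounds it by the `L¹` norm of that weight, which is the `L¹` norm of the
ordinary transform because the two differ by the measure-preserving rotation `(x, y) ↦ (y, -x)`.
-/

section PrincipalPart

variable {q : ℕ} [Fact q.Prime]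

/-- `r ∈ ℤ[1/q]` is a principal part of `x ∈ ℚ_q` if `x - r ∈ ℤ_q`. Such an `r` is determined
modulo `ℤ`; the fractional part `padicFract q x` is the representative in `[0, 1)`. -/
def IsPrincipalPart (q : ℕ) [Fact q.Prime] (x : ℚ_[q]) (r : ℚ) : Prop :=
  (∃ k : ℕ, ∃ m : ℤ, r * (q : ℚ) ^ k = m) ∧ ‖x - (r : ℚ_[q])‖ ≤ 1

theorem isPrincipalPart_zero {x : ℚ_[q]} (hx : ‖x‖ ≤ 1) : IsPrincipalPart q x 0 :=
  ⟨⟨0, 0, by simp⟩, by simpa using hx⟩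

theorem isPrincipalPart_inv_prime : IsPrincipalPart q (q : ℚ_[q])⁻¹ (q : ℚ)⁻¹ := by
  have hq : (q : ℚ) ≠ 0 := Nat.cast_ne_zero.mpr (Fact.out : q.Prime).ne_zero
  exact ⟨⟨1, 1, by simp [hq]⟩, by simp⟩

theorem IsPrincipalPart.add {x y : ℚ_[q]} {r s : ℚ} (hx : IsPrincipalPart q x r)
    (hy : IsPrincipalPart q y s) : IsPrincipalPart q (x + y) (r + s) := by
  obtain ⟨⟨k, m, hm⟩, hxr⟩ := hx
  obtain ⟨⟨l, m', hm'⟩, hys⟩ := hy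
  refine ⟨⟨k + l, m * q ^ l + m' * q ^ k, by push_cast; rw [← hm, ← hm']; ring⟩, ?_⟩
  rw [Rat.cast_add, add_sub_add_comm]
  exact (Padic.nonarchimedean _ _).trans (max_le hxr hys)

theorem IsPrincipalPart.neg {x : ℚ_[q]} {r : ℚ} (hx : IsPrincipalPart q x r) :
    IsPrincipalPart q (-x) (-r) := by
  obtain ⟨⟨k, m, hm⟩, hxr⟩ := hx
  refine ⟨⟨k, -m, by push_cast; rw [← hm]; ring⟩, ?_⟩
  rwa [Rat.cast_neg, ← neg_sub', norm_neg]

theorem IsPrincipalPart.exists_eq_intCast {r : ℚ} (hr : IsPrincipalPart q 0 r) :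
    ∃ l : ℤ, r = l := by
  obtain ⟨⟨k, m, hm⟩, hnorm⟩ := hr
  rw [zero_sub, norm_neg] at hnorm
  have hdvd : (q : ℤ) ^ k ∣ m := by
    have hm' : (m : ℚ_[q]) = (r : ℚ_[q]) * (q : ℚ_[q]) ^ k := by
      exact_mod_cast congrArg (Rat.cast : ℚ → ℚ_[q]) hm.symm
    rw [← Padic.norm_int_le_pow_iff_dvd, hm', norm_mul, Padic.norm_p_pow]
    exact mul_le_of_le_one_left (by positivity) hnorm
  obtain ⟨l, rfl⟩ := hdvd
  have hq : (q : ℚ) ^ k ≠ 0 := pow_ne_zero _ (Nat.cast_ne_zero.mpr (Fact.out : q.Prime).ne_zero)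
  exact ⟨l, mul_right_cancel₀ hq (by rw [hm]; push_cast; ring)⟩

theorem IsPrincipalPart.exists_eq_add_intCast {x : ℚ_[q]} {r s : ℚ} (hr : IsPrincipalPart q x r)
    (hs : IsPrincipalPart q x s) : ∃ l : ℤ, r = s + l := by
  have h := hr.add hs.neg
  rw [add_neg_cancel] at h
  obtain ⟨l, hl⟩ := h.exists_eq_intCast
  exact ⟨l, by rw [← hl]; ring⟩

theorem exists_isPrincipalPart_mem_Ico (x : ℚ_[q]) :
    ∃ r ∈ Set.Ico (0 : ℚ) 1, IsPrincipalPart q x r := by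
  have hq0 : (q : ℚ_[q]) ≠ 0 := Nat.cast_ne_zero.mpr (Fact.out : q.Prime).ne_zero
  have hqQ : (0 : ℚ) < q := Nat.cast_pos.mpr (Fact.out : q.Prime).pos
  have hqR : (0 : ℝ) < q := Nat.cast_pos.mpr (Fact.out : q.Prime).pos
  obtain ⟨k, hk⟩ := pow_unbounded_of_one_lt ‖x‖
    (Nat.one_lt_cast.mpr (Fact.out : q.Prime).one_lt : (1 : ℝ) < q)
  -- `x` is shifted into `ℤ_q` by `q ^ k` and approximated there by an integer in `[0, q ^ k)`.
  have hint : ‖x * (q : ℚ_[q]) ^ k‖ ≤ 1 := by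
    rw [norm_mul, Padic.norm_p_pow, zpow_neg, zpow_natCast, ← div_eq_mul_inv,
      div_le_one (by positivity)]
    exact hk.le
  obtain ⟨y, hy⟩ : ∃ y : ℤ_[q], (y : ℚ_[q]) = x * (q : ℚ_[q]) ^ k := ⟨⟨_, hint⟩, rfl⟩
  have happr : ‖(y : ℚ_[q]) - (y.appr k : ℚ_[q])‖ ≤ ‖(q : ℚ_[q]) ^ k‖ := by
    rw [Padic.norm_p_pow]
    exact_mod_cast (PadicInt.norm_le_pow_iff_mem_span_pow _ _).mpr (PadicInt.appr_spec k y)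
  refine ⟨y.appr k / (q : ℚ) ^ k, ⟨by positivity, ?_⟩, ⟨k, y.appr k, ?_⟩, ?_⟩
  · rw [div_lt_one (by positivity)]
    exact_mod_cast PadicInt.appr_lt y k
  · simp [hqQ.ne']
  · have hdiv : x - ((y.appr k / (q : ℚ) ^ k : ℚ) : ℚ_[q]) =
        ((y : ℚ_[q]) - (y.appr k : ℚ_[q])) / (q : ℚ_[q]) ^ k := by
      rw [hy]
      push_cast
      field_simp
    rw [hdiv, norm_div]
    exact div_le_one_of_le₀ happr (norm_nonneg _)

theorem isPrincipalPart_padicFract (x : ℚ_[q]) : IsPrincipalPart q x (padicFract q x) := by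
  have h : ∃ r : ℚ, 0 ≤ r ∧ r < 1 ∧ IsPrincipalPart q x r := by
    obtain ⟨r, ⟨h0, h1⟩, hr⟩ := exists_isPrincipalPart_mem_Ico x
    exact ⟨r, h0, h1, hr⟩
  have hchoose : padicFract q x = h.choose := dif_pos h
  rw [hchoose]
  exact h.choose_spec.2.2

end PrincipalPart

section StandardCharacter

variable {q : ℕ} [Fact q.Prime]

theorem stdChar_eq_exp {x : ℚ_[q]} {r : ℚ} (hr : IsPrincipalPart q x r) :
    stdChar q x = Complex.exp (2 * Real.pi * Complex.I * r) := by
  obtain ⟨l, hl⟩ := (isPrincipalPart_padicFract x).exists_eq_add_intCast hr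
  rw [stdChar, hl, Complex.exp_eq_exp_iff_exists_int]
  exact ⟨l, by push_cast; ring⟩

theorem stdChar_add (x y : ℚ_[q]) : stdChar q (x + y) = stdChar q x * stdChar q y := by
  rw [stdChar_eq_exp ((isPrincipalPart_padicFract x).add (isPrincipalPart_padicFract y)),
    stdChar, stdChar, ← Complex.exp_add]
  push_cast
  ring_nf

theorem stdChar_eq_one {x : ℚ_[q]} (hx : ‖x‖ ≤ 1) : stdChar q x = 1 := by
  simp [stdChar_eq_exp (isPrincipalPart_zero hx)]

theorem norm_stdChar (x : ℚ_[q]) : ‖stdChar q x‖ = 1 := by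
  simp [stdChar, Complex.norm_exp]

theorem stdChar_inv_prime_ne_one : stdChar q (q : ℚ_[q])⁻¹ ≠ 1 := by
  have hroot := Complex.isPrimitiveRoot_exp q (Fact.out : q.Prime).ne_zero
  rw [stdChar_eq_exp isPrincipalPart_inv_prime, Rat.cast_inv, Rat.cast_natCast, ← div_eq_mul_inv]
  exact hroot.ne_one (Fact.out : q.Prime).one_lt

/-- The standard character of `ℚ_q`, bundled as a homomorphism into the unit circle so that the
Fourier integrals of `VectorFourier` apply to it. -/
noncomputable def stdAddChar (q : ℕ) [Fact q.Prime] : AddChar ℚ_[q] Circle where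
  toFun x := ⟨stdChar q x, mem_sphere_zero_iff_norm.mpr (norm_stdChar x)⟩
  map_zero_eq_one' := Subtype.ext (stdChar_eq_one (by simp))
  map_add_eq_mul' x y := Subtype.ext (stdChar_add x y)

theorem stdAddChar_eq_one {x : ℚ_[q]} (hx : ‖x‖ ≤ 1) : stdAddChar q x = 1 :=
  Subtype.ext (stdChar_eq_one hx)

theorem stdAddChar_inv_prime_ne_one : stdAddChar q (q : ℚ_[q])⁻¹ ≠ 1 :=
  fun h => stdChar_inv_prime_ne_one (congrArg Subtype.val h)

theorem isLocallyConstant_stdAddChar : IsLocallyConstant (stdAddChar q) := by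
  rw [IsLocallyConstant.iff_eventually_eq]
  intro x
  filter_upwards [Metric.closedBall_mem_nhds x one_pos] with y hy
  rw [Metric.mem_closedBall, dist_eq_norm] at hy
  rw [← sub_add_cancel y x, AddChar.map_add_eq_mul, stdAddChar_eq_one hy, one_mul]

theorem continuous_stdAddChar : Continuous (stdAddChar q) :=
  isLocallyConstant_stdAddChar.continuous

theorem continuous_stdChar : Continuous (stdChar q) :=
  continuous_subtype_val.comp continuous_stdAddChar

theorem integrable_stdChar_mul {X : Type*} [TopologicalSpace X] [MeasurableSpace X]
    [OpensMeasurableSpace X] {κ : Measure X} {φ : X → ℚ_[q]} (hφ : Continuous φ) {g : X → ℂ}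
    (hg : Integrable g κ) : Integrable (fun w => stdChar q (φ w) * g w) κ :=
  hg.bdd_mul (continuous_stdChar.comp hφ).aestronglyMeasurable
    (.of_forall fun w => (norm_stdChar (φ w)).le)

theorem prime_le_norm_of_one_lt_norm {x : ℚ_[q]} (hx : 1 < ‖x‖) : (q : ℝ) ≤ ‖x‖ := by
  have h := Padic.norm_le_pow_iff_norm_lt_pow_add_one x 0
  rw [zpow_zero, zero_add, zpow_one] at h
  exact not_lt.mp (mt h.mpr hx.not_ge)

variable {ι : Type*} [Fintype ι]

theorem norm_dotProduct_le_mul (v w : ι → ℚ_[q]) : ‖v ⬝ᵥ w‖ ≤ ‖v‖ * ‖w‖ := by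
  refine IsUltrametricDist.norm_sum_le_of_forall_le_of_nonneg (by positivity) fun i _ => ?_
  rw [norm_mul]
  gcongr
  exacts [norm_le_pi_norm v i, norm_le_pi_norm w i]

theorem exists_norm_le_stdAddChar_dotProduct_ne_one {b : ℚ_[q]} {u : ι → ℚ_[q]} (hb : b ≠ 0)
    (hu : ‖b‖⁻¹ < ‖u‖) : ∃ h : ι → ℚ_[q], ‖h‖ ≤ ‖b‖ ∧ stdAddChar q (h ⬝ᵥ u) ≠ 1 := by
  obtain ⟨i, hi⟩ : ∃ i, ‖b‖⁻¹ < ‖u i‖ := by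
    by_contra! h
    exact hu.not_ge ((pi_norm_le_iff_of_nonneg (by positivity)).mpr h)
  have hui : 0 < ‖u i‖ := (by positivity : (0 : ℝ) ≤ ‖b‖⁻¹).trans_lt hi
  have hq : (q : ℝ) ≤ ‖b‖ * ‖u i‖ := by
    rw [← norm_mul]
    refine prime_le_norm_of_one_lt_norm ?_
    rwa [norm_mul, ← inv_lt_iff_one_lt_mul₀' (norm_pos_iff.mpr hb)]
  refine ⟨Pi.single i ((q : ℚ_[q])⁻¹ / u i), ?_, ?_⟩
  · rwa [Pi.norm_single, norm_div, norm_inv, Padic.norm_p, inv_inv, div_le_iff₀ hui]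
  · rw [single_dotProduct, div_mul_cancel₀ _ (norm_pos_iff.mp hui)]
    exact stdAddChar_inv_prime_ne_one

end StandardCharacter

section PeriodicAtScale

/-- `g` is invariant under all translations of norm at most `r`: on `ℚ_q^n`, `g` is constant on
the balls of radius `r`. -/
def PeriodicAtScale {E α : Type*} [NormedAddCommGroup E] (g : E → α) (r : ℝ) : Prop :=
  ∀ ⦃h : E⦄, ‖h‖ ≤ r → Function.Periodic g h

theorem exists_periodicAtScale (𝕜 : Type*) [NontriviallyNormedField 𝕜] {E α : Type*}
    [NormedAddCommGroup E] [Zero α] {g : E → α} (hg : IsLocallyConstant g)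
    (hgc : HasCompactSupport g) : ∃ b : 𝕜, b ≠ 0 ∧ PeriodicAtScale g ‖b‖ := by
  -- A locally constant function is a continuous function into a discrete space, so that uniform
  -- continuity makes it constant on balls of a fixed radius.
  let _ : UniformSpace α := ⊥
  have _ : DiscreteTopology α := ⟨rfl⟩
  have huc : UniformContinuous g := hgc.uniformContinuous_of_continuous hg.continuous
  obtain ⟨ε, hε, hconst⟩ := Metric.mem_uniformity_dist.mp
    (huc (Filter.mem_principal_self SetRel.id))
  obtain ⟨b, hb, hbε⟩ := NormedField.exists_norm_lt 𝕜 hε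
  refine ⟨b, norm_pos_iff.mp hb, fun h hh x => hconst ?_⟩
  rw [dist_eq_norm, add_sub_cancel_left]
  exact hh.trans_lt hbε

theorem periodicAtScale_indicator_closedBall {E α : Type*} [NormedAddCommGroup E]
    [IsUltrametricDist E] [Zero α] (r : ℝ) (c : α) :
    PeriodicAtScale ((Metric.closedBall (0 : E) r).indicator fun _ => c) r := by
  intro h hh x
  have hmem : x + h ∈ Metric.closedBall (0 : E) r ↔ x ∈ Metric.closedBall (0 : E) r := by
    simp only [mem_closedBall_zero_iff]
    refine ⟨fun hxh => ?_, fun hx => (IsUltrametricDist.norm_add_le_max x h).trans (max_le hx hh)⟩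
    rw [← add_neg_cancel_right x h]
    exact (IsUltrametricDist.norm_add_le_max _ _).trans (max_le hxh (norm_neg h ▸ hh))
  by_cases hx : x ∈ Metric.closedBall (0 : E) r <;> simp [Set.indicator, hmem, hx]

end PeriodicAtScale

section FourierInversion

theorem fourierIntegral_eq_zero_of_periodic {𝕜 V W E : Type*} [CommRing 𝕜] [AddCommGroup V]
    [Module 𝕜 V] [MeasurableSpace V] [MeasurableAdd V] [AddCommGroup W] [Module 𝕜 W]
    [NormedAddCommGroup E] [NormedSpace ℂ E] {e : AddChar 𝕜 Circle} (ν : Measure V)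
    [ν.IsAddRightInvariant] {L : V →ₗ[𝕜] W →ₗ[𝕜] 𝕜} {f : V → E} {h : V} {w : W}
    (hf : Function.Periodic f h) (hw : e (L h w) ≠ 1) :
    VectorFourier.fourierIntegral e ν L f w = 0 := by
  have htranslate := congrFun (VectorFourier.fourierIntegral_comp_add_right e ν L f h) w
  have hshift : (f ∘ fun v => v + h) = f := funext hf
  rw [hshift, Circle.smul_def] at htranslate
  by_contra hne
  have hone : (e (L h w) : ℂ) = 1 := smul_left_injective ℂ hne (by simpa using htranslate.symm)
  exact hw (Circle.ext hone)

theorem measure_closedBall_mul_measure_closedBall_inv {𝕜 E : Type*} [NormedField 𝕜]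
    [NormedAddCommGroup E] [NormedSpace 𝕜 E] [LocallyCompactSpace E] [MeasurableSpace E]
    [BorelSpace E] (ν : Measure E) [ν.IsAddHaarMeasure] [ν.Regular] {c : 𝕜} (hc : c ≠ 0) :
    ν (Metric.closedBall 0 ‖c‖) * ν (Metric.closedBall 0 ‖c‖⁻¹) =
      ν (Metric.closedBall 0 1) ^ 2 := by
  have hscale (u : 𝕜ˣ) : ν (Metric.closedBall 0 ‖(u : 𝕜)‖) =
      distribHaarChar E u * ν (Metric.closedBall 0 1) := by
    rw [distribHaarChar_mul, ← smul_unitClosedBall]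
    rfl
  lift c to 𝕜ˣ using hc.isUnit
  have hinv : ‖(c : 𝕜)‖⁻¹ = ‖((c⁻¹ : 𝕜ˣ) : 𝕜)‖ := by rw [Units.val_inv_eq_inv_val, norm_inv]
  have hchar : (distribHaarChar E c : ENNReal) * distribHaarChar E c⁻¹ = 1 := by
    rw [← ENNReal.coe_mul, ← map_mul, mul_inv_cancel, map_one, ENNReal.coe_one]
  rw [hinv, hscale, hscale, mul_mul_mul_comm, hchar, one_mul, sq]

theorem flip_dotProductBilin {R ι : Type*} [CommSemiring R] [Fintype ι] :
    (dotProductBilin R R (m := ι) (A := R)).flip = dotProductBilin R R :=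
  LinearMap.ext₂ fun v w => dotProduct_comm w v

variable {q : ℕ} [Fact q.Prime] {ι : Type*} [Fintype ι]

theorem continuous_dotProductBilin :
    Continuous fun z : (ι → ℚ_[q]) × (ι → ℚ_[q]) => dotProductBilin ℚ_[q] ℚ_[q] z.1 z.2 :=
  continuous_fst.dotProduct continuous_snd

variable [MeasurableSpace ℚ_[q]]

/-- The Fourier transform `w ↦ ∫ χ(-v·w) g(v) dν(v)` on `ℚ_q^ι`, with the sign convention of
`VectorFourier.fourierIntegral`. -/
noncomputable def stdFourier (ν : Measure (ι → ℚ_[q])) (g : (ι → ℚ_[q]) → ℂ) :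
    (ι → ℚ_[q]) → ℂ :=
  VectorFourier.fourierIntegral (stdAddChar q) ν (dotProductBilin ℚ_[q] ℚ_[q]) g

theorem stdFourier_apply (ν : Measure (ι → ℚ_[q])) (g : (ι → ℚ_[q]) → ℂ) (w : ι → ℚ_[q]) :
    stdFourier ν g w = ∫ v, stdChar q (-(v ⬝ᵥ w)) * g v ∂ν := rfl

variable [BorelSpace ℚ_[q]] {ν : Measure (ι → ℚ_[q])} {g : (ι → ℚ_[q]) → ℂ} {b : ℚ_[q]}

theorem stdFourier_eq_zero_of_inv_norm_lt [ν.IsAddRightInvariant] (hb : b ≠ 0)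
    (hg : PeriodicAtScale g ‖b‖) {w : ι → ℚ_[q]} (hw : ‖b‖⁻¹ < ‖w‖) : stdFourier ν g w = 0 := by
  obtain ⟨h, hh, hne⟩ := exists_norm_le_stdAddChar_dotProduct_ne_one hb hw
  exact fourierIntegral_eq_zero_of_periodic ν (hg hh) hne

theorem stdFourier_indicator_closedBall [ν.IsAddRightInvariant] (hb : b ≠ 0) :
    stdFourier ν ((Metric.closedBall 0 ‖b‖⁻¹).indicator fun _ => 1) =
      (Metric.closedBall 0 ‖b‖).indicator fun _ =>
        (ν.real (Metric.closedBall 0 ‖b‖⁻¹) : ℂ) := by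
  ext w
  by_cases hw : ‖w‖ ≤ ‖b‖
  · have hchar {v : ι → ℚ_[q]} (hv : v ∈ Metric.closedBall 0 ‖b‖⁻¹) :
        stdChar q (-(v ⬝ᵥ w)) = 1 := by
      refine stdChar_eq_one ?_
      rw [norm_neg]
      calc ‖v ⬝ᵥ w‖ ≤ ‖v‖ * ‖w‖ := norm_dotProduct_le_mul v w
        _ ≤ ‖b‖⁻¹ * ‖b‖ := by gcongr; exact mem_closedBall_zero_iff.mp hv
        _ = 1 := inv_mul_cancel₀ (norm_ne_zero_iff.mpr hb)
    rw [Set.indicator_of_mem (mem_closedBall_zero_iff.mpr hw), stdFourier_apply]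
    simp_rw [← Set.indicator_mul_right _ (fun v => stdChar q (-(v ⬝ᵥ w)))]
    rw [integral_indicator Metric.isClosed_closedBall.measurableSet,
      setIntegral_congr_fun Metric.isClosed_closedBall.measurableSet
        (fun v hv => by rw [hchar hv, mul_one]),
      setIntegral_const, Complex.real_smul, mul_one]
  · rw [Set.indicator_of_notMem (by simpa using hw)]
    refine stdFourier_eq_zero_of_inv_norm_lt (inv_ne_zero hb) ?_ (by simpa using hw)
    rw [norm_inv]
    exact periodicAtScale_indicator_closedBall _ _

theorem integral_stdFourier [ν.IsAddHaarMeasure] (hν : ν (Metric.closedBall 0 1) = 1)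
    (hb : b ≠ 0) (hg : PeriodicAtScale g ‖b‖) (hgi : Integrable g ν) :
    ∫ w, stdFourier ν g w ∂ν = g 0 := by
  let B := Metric.closedBall (0 : ι → ℚ_[q]) ‖b‖
  let B' := Metric.closedBall (0 : ι → ℚ_[q]) ‖b‖⁻¹
  have hB : MeasurableSet B := Metric.isClosed_closedBall.measurableSet
  have hB' : MeasurableSet B' := Metric.isClosed_closedBall.measurableSet
  have hB'fin : ν B' ≠ ⊤ := (isCompact_closedBall _ _).measure_ne_top
  have hsupport (w : ι → ℚ_[q]) :
      stdFourier ν g w = stdFourier ν g w • B'.indicator (fun _ => 1) w := by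
    by_cases hw : w ∈ B'
    · simp [hw]
    · rw [stdFourier_eq_zero_of_inv_norm_lt hb hg (by simpa [B'] using hw), zero_smul]
  have hconst {v : ι → ℚ_[q]} (hv : v ∈ B) : g v = g 0 := by
    simpa using hg (mem_closedBall_zero_iff.mp hv) 0
  calc ∫ w, stdFourier ν g w ∂ν
      = ∫ w, stdFourier ν g w • B'.indicator (fun _ => (1 : ℂ)) w ∂ν :=
        integral_congr_ae (.of_forall hsupport)
    _ = ∫ v, g v • stdFourier ν (B'.indicator fun _ => 1) v ∂ν := by
        have hparseval := VectorFourier.integral_fourierIntegral_smul_eq_flip (ν := ν)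
          (g := B'.indicator fun _ => (1 : ℂ)) continuous_stdAddChar continuous_dotProductBilin hgi
          ((integrable_indicator_iff hB').mpr (integrableOn_const hB'fin))
        rwa [flip_dotProductBilin] at hparseval
    _ = ∫ _ in B, g 0 * ν.real B' ∂ν := by
        rw [stdFourier_indicator_closedBall hb, ← integral_indicator hB]
        congr 1 with v
        by_cases hv : v ∈ B
        · simp [hv, hconst hv, B', B]
        · simp [hv, B]
    _ = (ν.real B * ν.real B' : ℝ) * g 0 := by
        rw [setIntegral_const, Complex.real_smul]
        push_cast
        ring
    _ = g 0 := by
        rw [measureReal_def, measureReal_def, ← ENNReal.toReal_mul,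
          measure_closedBall_mul_measure_closedBall_inv ν hb, hν]
        simp

theorem integral_stdChar_mul_stdFourier [ν.IsAddHaarMeasure]
    (hν : ν (Metric.closedBall 0 1) = 1) (hb : b ≠ 0) (hg : PeriodicAtScale g ‖b‖)
    (hgi : Integrable g ν) (a : ι → ℚ_[q]) :
    ∫ w, stdChar q (a ⬝ᵥ w) * stdFourier ν g w ∂ν = g a := by
  have htranslate : stdFourier ν (g ∘ fun v => v + a) =
      fun w => stdChar q (a ⬝ᵥ w) * stdFourier ν g w :=
    VectorFourier.fourierIntegral_comp_add_right _ ν _ g a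
  have hperiodic : PeriodicAtScale (g ∘ fun v => v + a) ‖b‖ := fun h hh v => by
    simpa only [Function.comp_apply, add_right_comm] using hg hh (v + a)
  calc ∫ w, stdChar q (a ⬝ᵥ w) * stdFourier ν g w ∂ν
      = ∫ w, stdFourier ν (g ∘ fun v => v + a) w ∂ν := by rw [htranslate]
    _ = (g ∘ fun v => v + a) 0 := integral_stdFourier hν hb hperiodic (hgi.comp_add_right a)
    _ = g a := by rw [Function.comp_apply, zero_add]

end FourierInversion

section SymplecticFourier

/-- The symplectic form `((x, y), (x', y')) ↦ x·y' - y·x'` on `R^ι × R^ι`. -/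
def symplForm (R ι : Type*) [CommRing R] [Fintype ι] :
    (ι → R) × (ι → R) →ₗ[R] (ι → R) × (ι → R) →ₗ[R] R :=
  (dotProductBilin R R).compl₁₂ (.fst R _ _) (.snd R _ _) -
    (dotProductBilin R R).compl₁₂ (.snd R _ _) (.fst R _ _)

theorem symplForm_apply {R ι : Type*} [CommRing R] [Fintype ι] (w z : (ι → R) × (ι → R)) :
    symplForm R ι w z = w.1 ⬝ᵥ z.2 - w.2 ⬝ᵥ z.1 := rfl

theorem neg_symplForm_apply {R ι : Type*} [CommRing R] [Fintype ι] (w z : (ι → R) × (ι → R)) :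
    -symplForm R ι w z = z.1 ⬝ᵥ w.2 - z.2 ⬝ᵥ w.1 := by
  rw [symplForm_apply, neg_sub, dotProduct_comm w.2, dotProduct_comm w.1]

theorem continuous_symplForm {R ι : Type*} [CommRing R] [TopologicalSpace R] [IsTopologicalRing R]
    [Fintype ι] : Continuous fun z : ((ι → R) × (ι → R)) × (ι → R) × (ι → R) =>
      symplForm R ι z.1 z.2 := by
  simp only [symplForm_apply]
  fun_prop

variable {q : ℕ} [Fact q.Prime] {d : ℕ} [MeasurableSpace ℚ_[q]] {ν : Measure (Fin d → ℚ_[q])}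
  {f : (Fin d → ℚ_[q]) × (Fin d → ℚ_[q]) → ℂ} {b : ℚ_[q]}

theorem symplFourier_eq_fourierIntegral :
    symplFourier q d ν f =
      VectorFourier.fourierIntegral (stdAddChar q) (ν.prod ν) (symplForm ℚ_[q] (Fin d)) f := by
  ext z
  refine integral_congr_ae (.of_forall fun w => ?_)
  dsimp only
  rw [neg_symplForm_apply]
  rfl

variable [BorelSpace ℚ_[q]]

theorem continuous_symplFourier (hf : Integrable f (ν.prod ν)) :
    Continuous (symplFourier q d ν f) := by
  rw [symplFourier_eq_fourierIntegral]
  exact VectorFourier.fourierIntegral_continuous continuous_stdAddChar continuous_symplForm hf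

theorem symplFourier_eq_zero_of_inv_norm_lt [SFinite ν] [ν.IsAddRightInvariant] (hb : b ≠ 0)
    (hf : PeriodicAtScale f ‖b‖) {z : (Fin d → ℚ_[q]) × (Fin d → ℚ_[q])} (hz : ‖b‖⁻¹ < ‖z‖) :
    symplFourier q d ν f z = 0 := by
  obtain ⟨h, hh, hne⟩ : ∃ h : (Fin d → ℚ_[q]) × (Fin d → ℚ_[q]),
      ‖h‖ ≤ ‖b‖ ∧ stdAddChar q (symplForm ℚ_[q] (Fin d) h z) ≠ 1 := by
    rcases lt_max_iff.mp hz with hx | hy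
    · obtain ⟨h, hh, hne⟩ := exists_norm_le_stdAddChar_dotProduct_ne_one hb hx
      exact ⟨(0, -h), by simpa using hh, by simpa [symplForm_apply] using hne⟩
    · obtain ⟨h, hh, hne⟩ := exists_norm_le_stdAddChar_dotProduct_ne_one hb hy
      exact ⟨(h, 0), by simpa using hh, by simpa [symplForm_apply] using hne⟩
  rw [symplFourier_eq_fourierIntegral]
  exact fourierIntegral_eq_zero_of_periodic _ (hf hh) hne

theorem hasCompactSupport_symplFourier [SFinite ν] [ν.IsAddRightInvariant] (hb : b ≠ 0)
    (hf : PeriodicAtScale f ‖b‖) : HasCompactSupport (symplFourier q d ν f) :=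
  .intro (isCompact_closedBall 0 ‖b‖⁻¹) fun _ hz =>
    symplFourier_eq_zero_of_inv_norm_lt hb hf (by simpa using hz)

theorem symplFourier_eq_stdFourier [SFinite ν] (hf : Integrable f (ν.prod ν))
    (x y : Fin d → ℚ_[q]) :
    symplFourier q d ν f (x, y) =
      stdFourier ν (fun u => ∫ v, stdChar q (x ⬝ᵥ v) * f (u, v) ∂ν) y := by
  have hphase (w : (Fin d → ℚ_[q]) × (Fin d → ℚ_[q])) :
      stdChar q (x ⬝ᵥ w.2 - y ⬝ᵥ w.1) * f w =
        stdChar q (-(w.1 ⬝ᵥ y)) * (stdChar q (x ⬝ᵥ w.2) * f w) := by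
    rw [sub_eq_neg_add, stdChar_add, mul_assoc, dotProduct_comm y]
  have hint : Integrable (fun w => stdChar q (-(w.1 ⬝ᵥ y)) * (stdChar q (x ⬝ᵥ w.2) * f w))
      (ν.prod ν) :=
    integrable_stdChar_mul (by fun_prop) (integrable_stdChar_mul (by fun_prop) hf)
  calc symplFourier q d ν f (x, y)
      = ∫ w, stdChar q (-(w.1 ⬝ᵥ y)) * (stdChar q (x ⬝ᵥ w.2) * f w) ∂ν.prod ν :=
        integral_congr_ae (.of_forall hphase)
    _ = ∫ u, ∫ v, stdChar q (-(u ⬝ᵥ y)) * (stdChar q (x ⬝ᵥ v) * f (u, v)) ∂ν ∂ν :=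
        integral_prod _ hint
    _ = stdFourier ν (fun u => ∫ v, stdChar q (x ⬝ᵥ v) * f (u, v) ∂ν) y := by
        simp_rw [integral_const_mul]
        rfl

theorem integral_stdChar_mul_symplFourier [ν.IsAddHaarMeasure]
    (hν : ν (Metric.closedBall 0 1) = 1) (hb : b ≠ 0) (hf : PeriodicAtScale f ‖b‖)
    (hfi : Integrable f (ν.prod ν)) (x a : Fin d → ℚ_[q]) :
    ∫ y, stdChar q (a ⬝ᵥ y) * symplFourier q d ν f (x, y) ∂ν =
      ∫ v, stdChar q (x ⬝ᵥ v) * f (a, v) ∂ν := by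
  let g (u : Fin d → ℚ_[q]) : ℂ := ∫ v, stdChar q (x ⬝ᵥ v) * f (u, v) ∂ν
  have hperiodic : PeriodicAtScale g ‖b‖ := by
    intro h hh u
    have hshift (v : Fin d → ℚ_[q]) : f (u + h, v) = f (u, v) := by
      have hh' : ‖(h, (0 : Fin d → ℚ_[q]))‖ ≤ ‖b‖ := by simpa using hh
      simpa using hf hh' (u, v)
    simp only [g, hshift]
  have hint : Integrable g ν :=
    (integrable_stdChar_mul (φ := fun w : (Fin d → ℚ_[q]) × (Fin d → ℚ_[q]) => x ⬝ᵥ w.2)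
      (by fun_prop) hfi).integral_prod_left
  simp_rw [symplFourier_eq_stdFourier hfi]
  exact integral_stdChar_mul_stdFourier hν hb hperiodic hint a

end SymplecticFourier

section WeylKernel

theorem locallyIntegrable_comp_fst {X Y E : Type*} [TopologicalSpace X] [MeasurableSpace X]
    [TopologicalSpace Y] [MeasurableSpace Y] [NormedAddCommGroup E] {κ : Measure X} [SFinite κ]
    {g : X → E} (hg : LocallyIntegrable g κ) (ν : Measure Y) [SFinite ν]
    [IsLocallyFiniteMeasure ν] : LocallyIntegrable (fun z : X × Y => g z.1) (κ.prod ν) := by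
  rintro ⟨x, y⟩
  obtain ⟨U, hU, hgU⟩ := hg x
  obtain ⟨V, hV, hνV⟩ := ν.finiteAt_nhds y
  have : IsFiniteMeasure (ν.restrict V) := ⟨by rwa [Measure.restrict_apply_univ]⟩
  refine ⟨U ×ˢ V, prod_mem_nhds hU hV, ?_⟩
  rw [IntegrableOn, ← Measure.prod_restrict]
  exact hgU.comp_fst (ν.restrict V)

theorem locallyIntegrable_comp_add_left {G E : Type*} [AddGroup G] [TopologicalSpace G]
    [ContinuousAdd G] [MeasurableSpace G] [BorelSpace G] [NormedAddCommGroup E]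
    {κ : Measure G} [κ.IsAddLeftInvariant] {g : G → E} (hg : LocallyIntegrable g κ) (a : G) :
    LocallyIntegrable (fun x => g (a + x)) κ := by
  rw [← map_add_left_eq_self κ a] at hg
  exact (locallyIntegrable_map_homeomorph (Homeomorph.addLeft a)).mp hg

variable {q : ℕ} [Fact q.Prime] {d : ℕ}

theorem sum_weyl_phase (ξ x y : Fin d → ℚ_[q]) :
    ∑ i, (y i * ξ i + x i * y i / 2) = (ξ + (2⁻¹ : ℚ_[q]) • x) ⬝ᵥ y := by
  refine Finset.sum_congr rfl fun i _ => ?_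
  simp only [Pi.add_apply, Pi.smul_apply, smul_eq_mul]
  ring

variable [MeasurableSpace ℚ_[q]] {ν : Measure (Fin d → ℚ_[q])}
  {f : (Fin d → ℚ_[q]) × (Fin d → ℚ_[q]) → ℂ} {b : ℚ_[q]}

theorem weylKernel_add_right (ξ x : Fin d → ℚ_[q]) :
    weylKernel q d ν f ξ (ξ + x) =
      ∫ v, stdChar q (x ⬝ᵥ v) * f (ξ + (2⁻¹ : ℚ_[q]) • x, v) ∂ν := by
  have hmid : (fun i => ((ξ + x) i + ξ i) / 2) = ξ + (2⁻¹ : ℚ_[q]) • x := by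
    ext i
    simp only [Pi.add_apply, Pi.smul_apply, smul_eq_mul]
    ring
  simp_rw [weylKernel, hmid, Pi.add_apply, add_sub_cancel_left, mul_comm (f _)]
  rfl

theorem weylOp_eq_integral_weylKernel [BorelSpace ℚ_[q]] [ν.IsAddHaarMeasure]
    (hν : ν (Metric.closedBall 0 1) = 1) (hb : b ≠ 0) (hf : PeriodicAtScale f ‖b‖)
    (hfi : Integrable f (ν.prod ν)) {ψ : (Fin d → ℚ_[q]) → ℂ} (hψ : LocallyIntegrable ψ ν)
    (ξ : Fin d → ℚ_[q]) :
    weylOp q d ν f ψ ξ = ∫ η, weylKernel q d ν f ξ η * ψ η ∂ν := by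
  let phase (z : (Fin d → ℚ_[q]) × (Fin d → ℚ_[q])) : ℂ :=
    stdChar q ((ξ + (2⁻¹ : ℚ_[q]) • z.1) ⬝ᵥ z.2)
  have hint : Integrable (fun z => phase z * (symplFourier q d ν f z * ψ (ξ + z.1)))
      (ν.prod ν) :=
    integrable_stdChar_mul (by fun_prop)
      ((locallyIntegrable_comp_fst (locallyIntegrable_comp_add_left hψ ξ) ν
        ).integrable_smul_left_of_hasCompactSupport (continuous_symplFourier hfi)
          (hasCompactSupport_symplFourier hb hf))
  calc weylOp q d ν f ψ ξ
      = ∫ z, phase z * (symplFourier q d ν f z * ψ (ξ + z.1)) ∂ν.prod ν := by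
        simp_rw [weylOp, sum_weyl_phase, mul_comm _ (stdChar q _)]
        rfl
    _ = ∫ x, (∫ y, phase (x, y) * symplFourier q d ν f (x, y) ∂ν) * ψ (ξ + x) ∂ν := by
        simp_rw [integral_prod _ hint, ← mul_assoc, integral_mul_const]
    _ = ∫ x, weylKernel q d ν f ξ (ξ + x) * ψ (ξ + x) ∂ν := by
        simp_rw [weylKernel_add_right, phase,
          integral_stdChar_mul_symplFourier hν hb hf hfi]
    _ = ∫ η, weylKernel q d ν f ξ η * ψ η ∂ν :=
        integral_add_left_eq_self (fun η => weylKernel q d ν f ξ η * ψ η) ξ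

end WeylKernel

section WeightedMinkowski

open scoped ENNReal

variable {X Z : Type*} [MeasurableSpace X] [MeasurableSpace Z] {κ : Measure X} {ν : Measure Z}

theorem lintegral_mul_rpow_le {F g : Z → ℝ≥0∞} (hF : AEMeasurable F ν) (hg : AEMeasurable g ν)
    {s : ℝ} (hs : 1 ≤ s) :
    (∫⁻ z, F z * g z ∂ν) ^ s ≤ (∫⁻ z, F z ∂ν) ^ (s - 1) * ∫⁻ z, F z * g z ^ s ∂ν := by
  have hs0 : 0 < s := zero_lt_one.trans_le hs
  have hp : 0 ≤ 1 - s⁻¹ := sub_nonneg.mpr (inv_le_one_of_one_le₀ hs)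
  have hq : 0 ≤ s⁻¹ := inv_nonneg.mpr hs0.le
  have hsplit (z : Z) : F z ^ (1 - s⁻¹) * (F z * g z ^ s) ^ s⁻¹ = F z * g z := by
    rw [ENNReal.mul_rpow_of_nonneg _ _ hq, ENNReal.rpow_rpow_inv hs0.ne', ← mul_assoc,
      ← ENNReal.rpow_add_of_nonneg _ _ hp hq, sub_add_cancel, ENNReal.rpow_one]
  have hholder := ENNReal.lintegral_mul_norm_pow_le hF (hF.mul (hg.pow_const s)) hp hq
    (sub_add_cancel 1 s⁻¹)
  simp only [Pi.mul_apply, hsplit] at hholder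
  calc (∫⁻ z, F z * g z ∂ν) ^ s
      ≤ ((∫⁻ z, F z ∂ν) ^ (1 - s⁻¹) * (∫⁻ z, F z * g z ^ s ∂ν) ^ s⁻¹) ^ s := by gcongr
    _ = (∫⁻ z, F z ∂ν) ^ (s - 1) * ∫⁻ z, F z * g z ^ s ∂ν := by
        rw [ENNReal.mul_rpow_of_nonneg _ _ hs0.le, ENNReal.rpow_inv_rpow hs0.ne',
          ← ENNReal.rpow_mul, sub_mul, one_mul, inv_mul_cancel₀ hs0.ne']

variable [SFinite κ] [SFinite ν] {F : Z → ℝ≥0∞} {h : X → Z → ℝ≥0∞} {C : ℝ≥0∞}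

theorem lintegral_rpow_lintegral_mul_le (hF : AEMeasurable F ν)
    (hh : AEMeasurable (Function.uncurry h) (κ.prod ν)) {s : ℝ} (hs : 1 ≤ s)
    (hC : ∀ᵐ z ∂ν, ∫⁻ x, h x z ^ s ∂κ ≤ C ^ s) :
    ∫⁻ x, (∫⁻ z, F z * h x z ∂ν) ^ s ∂κ ≤ ((∫⁻ z, F z ∂ν) * C) ^ s := by
  have hsection : ∀ᵐ x ∂κ, AEMeasurable (h x) ν :=
    hh.aestronglyMeasurable.prodMk_left.mono fun _ hx => hx.aemeasurable
  have hsection' : ∀ᵐ z ∂ν, AEMeasurable (fun x => h x z) κ :=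
    hh.prod_swap.aestronglyMeasurable.prodMk_left.mono fun _ hz => hz.aemeasurable
  have hpow : AEMeasurable (Function.uncurry fun x z => F z * h x z ^ s) (κ.prod ν) :=
    hF.comp_snd.mul (hh.pow_const s)
  calc ∫⁻ x, (∫⁻ z, F z * h x z ∂ν) ^ s ∂κ
      ≤ ∫⁻ x, (∫⁻ z, F z ∂ν) ^ (s - 1) * ∫⁻ z, F z * h x z ^ s ∂ν ∂κ :=
        lintegral_mono_ae (hsection.mono fun x hx => lintegral_mul_rpow_le hF hx hs)
    _ = (∫⁻ z, F z ∂ν) ^ (s - 1) * ∫⁻ z, ∫⁻ x, F z * h x z ^ s ∂κ ∂ν := by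
        rw [lintegral_const_mul'' _ hpow.lintegral_prod_right]
        exact congrArg _ (lintegral_lintegral_swap hpow)
    _ ≤ (∫⁻ z, F z ∂ν) ^ (s - 1) * ∫⁻ z, F z * C ^ s ∂ν := by
        refine mul_le_mul' le_rfl (lintegral_mono_ae ?_)
        filter_upwards [hsection', hC] with z hz hCz
        rw [lintegral_const_mul'' _ (hz.pow_const s)]
        gcongr
    _ = ((∫⁻ z, F z ∂ν) * C) ^ s := by
        rw [lintegral_mul_const'' _ hF, ← mul_assoc,
          ENNReal.mul_rpow_of_nonneg _ _ (zero_le_one.trans hs)]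
        nth_rw 2 [← ENNReal.rpow_one (∫⁻ z, F z ∂ν)]
        rw [← ENNReal.rpow_add_of_nonneg _ _ (sub_nonneg.mpr hs) zero_le_one, sub_add_cancel]

theorem ae_ae_le_const_comm (hh : AEMeasurable (Function.uncurry h) (κ.prod ν))
    (hC : ∀ᵐ z ∂ν, ∀ᵐ x ∂κ, h x z ≤ C) : ∀ᵐ x ∂κ, ∀ᵐ z ∂ν, h x z ≤ C := by
  obtain ⟨g, hg, hhg⟩ := hh
  have hhg' : ∀ᵐ z ∂ν, ∀ᵐ x ∂κ, h x z = g (x, z) :=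
    Measure.ae_ae_of_ae_prod (Measure.measurePreserving_swap.quasiMeasurePreserving.ae hhg)
  have hgC : ∀ᵐ z ∂ν, ∀ᵐ x ∂κ, g (x, z) ≤ C := by
    filter_upwards [hC, hhg'] with z hCz hz
    filter_upwards [hCz, hz] with x hx hxg using hxg ▸ hx
  have hmeas : MeasurableSet {z : X × Z | g (z.1, z.2) ≤ C} := measurableSet_le hg measurable_const
  filter_upwards [(Measure.ae_ae_comm hmeas).mpr hgC, Measure.ae_ae_of_ae_prod hhg] with x hx hxg
  filter_upwards [hx, hxg] with z hz hzg using hzg.trans_le hz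

theorem eLpNorm_lintegral_mul_le (hF : AEMeasurable F ν)
    (hh : AEMeasurable (Function.uncurry h) (κ.prod ν)) {r : ℝ≥0∞} (hr : 1 ≤ r)
    (hC : ∀ᵐ z ∂ν, eLpNorm (fun x => h x z) r κ ≤ C) :
    eLpNorm (fun x => ∫⁻ z, F z * h x z ∂ν) r κ ≤ (∫⁻ z, F z ∂ν) * C := by
  rcases eq_or_ne r ∞ with rfl | hr_top
  · refine eLpNormEssSup_le_of_ae_enorm_bound ?_
    have hbound : ∀ᵐ z ∂ν, ∀ᵐ x ∂κ, h x z ≤ C :=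
      hC.mono fun _ hz => ae_le_eLpNormEssSup.mono fun _ hx => hx.trans hz
    filter_upwards [ae_ae_le_const_comm hh hbound] with x hx
    calc ‖∫⁻ z, F z * h x z ∂ν‖ₑ = ∫⁻ z, F z * h x z ∂ν := enorm_eq_self _
      _ ≤ ∫⁻ z, F z * C ∂ν := lintegral_mono_ae (hx.mono fun _ hz => by gcongr)
      _ = (∫⁻ z, F z ∂ν) * C := lintegral_mul_const'' _ hF
  · have hr0 : r ≠ 0 := (zero_lt_one.trans_le hr).ne'
    have hs : 1 ≤ r.toReal := by simpa using ENNReal.toReal_mono hr_top hr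
    have hs0 : 0 < r.toReal := zero_lt_one.trans_le hs
    simp only [eLpNorm_eq_lintegral_rpow_enorm_toReal hr0 hr_top, enorm_eq_self, one_div,
      ENNReal.rpow_inv_le_iff hs0] at hC ⊢
    exact lintegral_rpow_lintegral_mul_le hF hh hs hC

end WeightedMinkowski

section WeylOperatorBound

open scoped ENNReal

variable {q : ℕ} [Fact q.Prime] {d : ℕ} [MeasurableSpace ℚ_[q]] {ν : Measure (Fin d → ℚ_[q])}
  {f : (Fin d → ℚ_[q]) × (Fin d → ℚ_[q]) → ℂ} {ψ : (Fin d → ℚ_[q]) → ℂ}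

theorem enorm_weylOp_le (ξ : Fin d → ℚ_[q]) :
    ‖weylOp q d ν f ψ ξ‖ₑ ≤ ∫⁻ z, ‖symplFourier q d ν f z‖ₑ * ‖ψ (ξ + z.1)‖ₑ ∂ν.prod ν := by
  refine (enorm_integral_le_lintegral_enorm _).trans_eq (lintegral_congr fun z => ?_)
  have hunit : ‖stdChar q (∑ i, (z.2 i * ξ i + z.1 i * z.2 i / 2))‖ₑ = 1 := by
    rw [← ofReal_norm, norm_stdChar, ENNReal.ofReal_one]
  rw [enorm_mul, enorm_mul, hunit, mul_one]

theorem fourier2n_eq_symplFourier (w : (Fin d → ℚ_[q]) × (Fin d → ℚ_[q])) :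
    fourier2n q d ν f w = symplFourier q d ν f (w.2, -w.1) := by
  refine integral_congr_ae (.of_forall fun x => ?_)
  simp only [Pi.neg_apply, neg_mul, Finset.sum_neg_distrib, sub_neg_eq_add]
  rw [mul_comm, add_comm]

theorem measurePreserving_prodMk_snd_neg_fst {G : Type*} [AddGroup G] [MeasurableSpace G]
    [MeasurableNeg G] (κ : Measure G) [SFinite κ] [κ.IsNegInvariant] :
    MeasurePreserving (fun w : G × G => (w.2, -w.1)) (κ.prod κ) (κ.prod κ) :=
  ((MeasurePreserving.id κ).prod (Measure.measurePreserving_neg κ)).comp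
    Measure.measurePreserving_swap

theorem quasiMeasurePreserving_add_comp {G Z : Type*} [AddGroup G] [MeasurableSpace G]
    [MeasurableAdd₂ G] [MeasurableSpace Z] (κ : Measure G) [SFinite κ] [κ.IsAddRightInvariant]
    (ρ : Measure Z) [SFinite ρ] {t : Z → G} (ht : Measurable t) :
    Measure.QuasiMeasurePreserving (fun w : G × Z => w.1 + t w.2) (κ.prod ρ) κ := by
  have hshear : MeasurePreserving (fun w : Z × G => (w.1, w.2 + t w.1)) (ρ.prod κ) (ρ.prod κ) :=
    (MeasurePreserving.id ρ).skew_product (g := fun z x => x + t z)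
      (measurable_snd.add (ht.comp measurable_fst))
      (.of_forall fun z => map_add_right_eq_self κ (t z))
  exact Measure.quasiMeasurePreserving_snd.comp
    (hshear.comp Measure.measurePreserving_swap).quasiMeasurePreserving

theorem eLpNorm_weylOp_le [BorelSpace ℚ_[q]] [SFinite ν] [ν.IsAddRightInvariant]
    (hf : Integrable f (ν.prod ν)) (hψ : AEStronglyMeasurable ψ ν) {r : ℝ≥0∞} (hr : 1 ≤ r) :
    eLpNorm (weylOp q d ν f ψ) r ν ≤
      eLpNorm (symplFourier q d ν f) 1 (ν.prod ν) * eLpNorm ψ r ν := by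
  have hF : AEMeasurable (fun z => ‖symplFourier q d ν f z‖ₑ) (ν.prod ν) :=
    (continuous_symplFourier hf).aestronglyMeasurable.enorm
  have hh : AEMeasurable (Function.uncurry fun ξ (z : (Fin d → ℚ_[q]) × (Fin d → ℚ_[q])) =>
      ‖ψ (ξ + z.1)‖ₑ) (ν.prod (ν.prod ν)) :=
    hψ.enorm.comp_quasiMeasurePreserving (quasiMeasurePreserving_add_comp ν _ measurable_fst)
  have htranslate (z : (Fin d → ℚ_[q]) × (Fin d → ℚ_[q])) :
      eLpNorm (fun ξ => ‖ψ (ξ + z.1)‖ₑ) r ν ≤ eLpNorm ψ r ν := by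
    rw [eLpNorm_enorm fun ξ => ψ (ξ + z.1)]
    exact (eLpNorm_comp_measurePreserving hψ (measurePreserving_add_right ν z.1)).le
  calc eLpNorm (weylOp q d ν f ψ) r ν
      ≤ eLpNorm (fun ξ => ∫⁻ z, ‖symplFourier q d ν f z‖ₑ * ‖ψ (ξ + z.1)‖ₑ ∂ν.prod ν) r ν :=
        eLpNorm_mono_enorm fun ξ => (enorm_weylOp_le ξ).trans_eq (enorm_eq_self _).symm
    _ ≤ (∫⁻ z, ‖symplFourier q d ν f z‖ₑ ∂ν.prod ν) * eLpNorm ψ r ν :=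
        eLpNorm_lintegral_mul_le hF hh hr (.of_forall htranslate)
    _ = eLpNorm (symplFourier q d ν f) 1 (ν.prod ν) * eLpNorm ψ r ν := by
        rw [eLpNorm_one_eq_lintegral_enorm]

theorem eLpNorm_fourier2n [BorelSpace ℚ_[q]] [SFinite ν] [ν.IsNegInvariant]
    (hf : Integrable f (ν.prod ν)) (r : ℝ≥0∞) :
    eLpNorm (fourier2n q d ν f) r (ν.prod ν) = eLpNorm (symplFourier q d ν f) r (ν.prod ν) := by
  rw [funext fourier2n_eq_symplFourier]
  exact eLpNorm_comp_measurePreserving (continuous_symplFourier hf).aestronglyMeasurable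
    (measurePreserving_prodMk_snd_neg_fst ν)

end WeylOperatorBound

theorem weylOp_kernel_and_L2_bound_general [μ.IsAddHaarMeasure]
    (hμ : μ {x : Fin n → ℚ_[p] | ∀ i, ‖x i‖ ≤ 1} = 1)
    (f : (Fin n → ℚ_[p]) × (Fin n → ℚ_[p]) → ℂ)
    (hf : IsLocallyConstant f) (hfc : HasCompactSupport f)
    (ψ : (Fin n → ℚ_[p]) → ℂ) (hψ : LocallyIntegrable ψ μ) {r : ENNReal} (hr : 1 ≤ r) :
    (∀ ξ : Fin n → ℚ_[p],
      weylOp p n μ f ψ ξ = ∫ η, weylKernel p n μ f ξ η * ψ η ∂μ) ∧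
    eLpNorm (weylOp p n μ f ψ) r μ ≤
      eLpNorm (fourier2n p n μ f) 1 (μ.prod μ) * eLpNorm ψ r μ := by
  have hball : μ (Metric.closedBall 0 1) = 1 := by
    rw [← hμ]
    congr 1 with x
    simp [pi_norm_le_iff_of_nonneg]
  have hfi : Integrable f (μ.prod μ) := hf.continuous.integrable_of_hasCompactSupport hfc
  obtain ⟨b, hb, hper⟩ := exists_periodicAtScale ℚ_[p] hf hfc
  refine ⟨weylOp_eq_integral_weylKernel hball hb hper hfi hψ, ?_⟩
  rw [eLpNorm_fourier2n hfi]
  exact eLpNorm_weylOp_le hfi hψ.aestronglyMeasurable hr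

/-- The Weyl operator is an integral operator with kernel `weylKernel`, and its `L²`
operator norm is bounded by the `L¹` norm of the Fourier transform of the symbol:
`‖W_f[ψ]‖₂ ≤ ‖F[f]‖₁ ‖ψ‖₂`. -/
theorem weylOp_kernel_and_L2_bound [μ.IsAddHaarMeasure]
    (hμ : μ {x : Fin n → ℚ_[p] | ∀ i, ‖x i‖ ≤ 1} = 1)
    (f : (Fin n → ℚ_[p]) × (Fin n → ℚ_[p]) → ℂ)
    (hf : IsLocallyConstant f) (hfc : HasCompactSupport f)
    (ψ : (Fin n → ℚ_[p]) → ℂ)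
    (hψ : IsLocallyConstant ψ) (hψc : HasCompactSupport ψ) :
    (∀ ξ : Fin n → ℚ_[p],
      weylOp p n μ f ψ ξ = ∫ η, weylKernel p n μ f ξ η * ψ η ∂μ) ∧
    eLpNorm (weylOp p n μ f ψ) 2 μ ≤
      eLpNorm (fourier2n p n μ f) 1 (μ.prod μ) * eLpNorm ψ 2 μ := by
  exact weylOp_kernel_and_L2_bound_general p n μ hμ f hf hfc ψ hψ.continuous.locallyIntegrable
    one_le_two
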